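/- The sequence W^(1)[g_n], indexed over odd n ≥ 3, is strictly decreasing: for every odd n ≥ 3, W^(1)[g_{n+2}] < W^(1)[g_n]. -/

import Mathlib

/-!
Write `n = 2m + 3`. The weight-2 bits of `g_n` outvote the other three unless they sum to zero, so
`g_n` is the majority of `2m` bits with ties broken by the majority of the last three. For any
balanced tie-breaker `h`, let `p m = C(2m, m) / 4 ^ m` be the probability of a tie. A heavy bit has
degree-one coefficient `p m` (it is pivotal for the signed majority only next to a tie), and a light
bit has coefficient `p m * ĥ({j})`. Hence the level-one weight is `p m ^ 2 * (2m + W¹[h])`. Since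
`p (m + 1) / p m = (2m + 1) / (2m + 2)`, this strictly decreases in `m` as soon as `W¹[h] > 2/3`,
and the majority of three bits has `W¹ = 3/4`.
-/

open Finset

namespace BKS

/-- sign function: 1 if z ≥ 0, -1 otherwise. -/
noncomputable def sgn (z : ℝ) : ℝ := if 0 ≤ z then 1 else -1

/-- encode Bool as the ±1 value of a bit. -/
def chi (b : Bool) : ℝ := if b then 1 else -1

/-- Fourier coefficient of f at S. -/
noncomputable def fourierCoeff {n : ℕ} (f : (Fin n → Bool) → ℝ) (S : Finset (Fin n)) : ℝ :=
  (1 / 2 ^ n : ℝ) * ∑ x : Fin n → Bool, f x * ∏ i ∈ S, chi (x i)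

/-- Fourier weight of f at level k: W^(k)[f]. -/
noncomputable def fourierWeight {n : ℕ} (k : ℕ) (f : (Fin n → Bool) → ℝ) : ℝ :=
  ∑ S ∈ Finset.univ.filter (fun S : Finset (Fin n) => S.card = k), (fourierCoeff f S) ^ 2

/-- Noise stability of f at ρ. -/
noncomputable def noiseStab {n : ℕ} (ρ : ℝ) (f : (Fin n → Bool) → ℝ) : ℝ :=
  ∑ k ∈ Finset.range (n + 1), ρ ^ k * fourierWeight k f

/-- Majority function on n bits. -/
noncomputable def Maj (n : ℕ) : (Fin n → Bool) → ℝ := fun x => sgn (∑ i, chi (x i))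

/-- The function g_n(x) = sgn(2(x_1 + ⋯ + x_{n-3}) + x_{n-2} + x_{n-1} + x_n). -/
noncomputable def gfun (n : ℕ) : (Fin n → Bool) → ℝ :=
  fun x => sgn (∑ i : Fin n, (if (i : ℕ) < n - 3 then (2 : ℝ) else 1) * chi (x i))

/-- f is a linear threshold function. -/
def IsLTF {n : ℕ} (f : (Fin n → Bool) → ℝ) : Prop :=
  ∃ (w0 : ℝ) (w : Fin n → ℝ), ∀ x, f x = sgn (w0 + ∑ i, w i * chi (x i))

section Cube

variable {ι : Type*}

lemma chi_not (b : Bool) : chi (!b) = -chi b := by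
  cases b <;> simp [chi]

lemma abs_chi (b : Bool) : |chi b| = 1 := by
  cases b <;> simp [chi]

variable [Fintype ι]

/-- The Hamming weight of `x`. Sums over the cube of functions symmetric in the bits are reduced to
binomial sums by expressing the summand through it. -/
def trueCount (x : ι → Bool) : ℕ := #{i | x i = true}

lemma sum_chi_eq (x : ι → Bool) : ∑ i, chi (x i) = 2 * trueCount x - Fintype.card ι := by
  have chi_eq (b : Bool) : chi b = 2 * (if b = true then 1 else 0) - 1 := by
    cases b <;> norm_num [chi]
  simp only [chi_eq, sum_sub_distrib, ← mul_sum, sum_boole, sum_const, card_univ, nsmul_eq_mul,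
    mul_one, trueCount]

lemma abs_sum_chi_le (x : ι → Bool) : |∑ i, chi (x i)| ≤ Fintype.card ι :=
  (abs_sum_le_sum_abs _ _).trans_eq <| by simp [abs_chi]

lemma sum_chi_ne_zero (hι : Odd (Fintype.card ι)) (x : ι → Bool) : ∑ i, chi (x i) ≠ 0 := by
  rw [sum_chi_eq, sub_ne_zero]
  norm_cast
  exact fun h ↦ Nat.not_even_iff_odd.2 hι (h ▸ even_two_mul _)

variable [DecidableEq ι]

lemma sum_eq_zero_of_not_eq_neg {f : (ι → Bool) → ℝ} (hf : ∀ x, f (fun i ↦ !x i) = -f x) :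
    ∑ x, f x = 0 := by
  have h : ∑ x, f x = -∑ x, f x := calc
    ∑ x, f x = ∑ x : ι → Bool, f (fun i ↦ !x i) :=
      (Equiv.sum_comp (Equiv.piCongrRight fun _ ↦ Equiv.boolNot) f).symm
    _ = -∑ x, f x := by simp only [hf, sum_neg_distrib]
  linarith

lemma sum_chi_apply (i : ι) : ∑ x : ι → Bool, chi (x i) = 0 :=
  sum_eq_zero_of_not_eq_neg fun x ↦ chi_not (x i)

lemma sum_comp_trueCount {M : Type*} [AddCommMonoid M] (F : ℕ → M) :
    ∑ x : ι → Bool, F (trueCount x)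
      = ∑ k ∈ range (Fintype.card ι + 1), (Fintype.card ι).choose k • F k := calc
  ∑ x : ι → Bool, F (trueCount x) = ∑ s ∈ (univ : Finset ι).powerset, F #s :=
    sum_bij' (fun x _ ↦ ({i | x i = true} : Finset ι)) (fun s _ i ↦ decide (i ∈ s))
      (by simp) (by simp) (by simp) (by simp) (fun _ _ ↦ rfl)
  _ = _ := by rw [sum_powerset_apply_card, card_univ]

lemma card_filter_trueCount_eq (k : ℕ) :
    #{x : ι → Bool | trueCount x = k} = (Fintype.card ι).choose k := by
  rw [card_filter, sum_comp_trueCount fun c ↦ if c = k then 1 else 0]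
  simp only [smul_eq_mul, mul_ite, mul_one, mul_zero, sum_ite_eq', mem_range, Nat.lt_succ_iff]
  exact ite_eq_left_iff.2 fun hk ↦ (Nat.choose_eq_zero_of_lt (not_le.1 hk)).symm

end Cube

lemma sum_univ_append {α M : Type*} [Fintype α] [AddCommMonoid M] {m n : ℕ}
    (f : (Fin (m + n) → α) → M) :
    ∑ z, f z = ∑ x : Fin m → α, ∑ y : Fin n → α, f (Fin.append x y) := by
  rw [← (Fin.appendEquiv m n).sum_comp, Fintype.sum_prod_type]
  rfl

lemma sum_mul_chi_eq_sum_insertNth_sub {n : ℕ} (f : (Fin (n + 1) → Bool) → ℝ) (i : Fin (n + 1)) :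
    ∑ x, f x * chi (x i)
      = ∑ x : Fin n → Bool, (f (i.insertNth true x) - f (i.insertNth false x)) := by
  rw [← (Fin.insertNthEquiv (fun _ ↦ Bool) i).sum_comp, Fintype.sum_prod_type_right]
  simp [Fin.insertNthEquiv, chi, sub_eq_add_neg]

lemma trueCount_insertNth {n : ℕ} (i : Fin (n + 1)) (b : Bool) (x : Fin n → Bool) :
    trueCount (i.insertNth b x : Fin (n + 1) → Bool) = b.toNat + trueCount x := by
  simp only [trueCount, card_filter, Fin.sum_univ_succAbove _ i, Fin.insertNth_apply_same,
    Fin.insertNth_apply_succAbove]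
  cases b <;> rfl

lemma sum_comp_trueCount_mul_chi {n : ℕ} (F : ℕ → ℝ) (i : Fin n) :
    ∑ x : Fin n → Bool, F (trueCount x) * chi (x i)
      = ∑ k ∈ range n, (n - 1).choose k * (F (k + 1) - F k) := by
  obtain _ | n := n
  · exact i.elim0
  rw [sum_mul_chi_eq_sum_insertNth_sub (fun x ↦ F (trueCount x))]
  simp only [trueCount_insertNth, Bool.toNat_true, Bool.toNat_false, zero_add, add_comm 1]
  simpa using sum_comp_trueCount (ι := Fin n) fun k ↦ F (k + 1) - F k

lemma fourierCoeff_singleton {n : ℕ} (f : (Fin n → Bool) → ℝ) (i : Fin n) :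
    fourierCoeff f {i} = (∑ x, f x * chi (x i)) / 2 ^ n := by
  simp only [fourierCoeff, prod_singleton]
  ring

lemma fourierWeight_one {n : ℕ} (f : (Fin n → Bool) → ℝ) :
    fourierWeight 1 f = ∑ i, fourierCoeff f {i} ^ 2 := by
  have h : ({S | #S = 1} : Finset (Finset (Fin n))) = univ.image fun i ↦ {i} := by
    ext S
    simp [card_eq_one, eq_comm]
  rw [fourierWeight, h, sum_image (singleton_injective.injOn)]

/-- The probability that `2 * m` independent uniform signs sum to zero. -/
noncomputable def tieProb (m : ℕ) : ℝ := m.centralBinom / 2 ^ (2 * m)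

lemma tieProb_pos (m : ℕ) : 0 < tieProb m :=
  div_pos (mod_cast m.centralBinom_pos) (by positivity)

lemma tieProb_succ (m : ℕ) : tieProb (m + 1) = tieProb m * ((2 * m + 1) / (2 * m + 2)) := by
  have h : ((m : ℝ) + 1) * (m + 1).centralBinom = 2 * (2 * m + 1) * m.centralBinom :=
    mod_cast m.succ_mul_centralBinom_succ
  rw [tieProb, tieProb, mul_add_one, pow_add]
  field_simp
  linear_combination h

lemma strictAnti_tieProb_sq_mul {w : ℝ} (hw : 2 / 3 < w) :
    StrictAnti fun m : ℕ ↦ tieProb m ^ 2 * (2 * m + w) := by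
  refine strictAnti_nat_of_succ_lt fun m ↦ ?_
  have h : ((2 * m + 1) / (2 * m + 2) : ℝ) ^ 2 * (2 * (m + 1) + w) < 2 * m + w := by
    rw [div_pow, div_mul_eq_mul_div, div_lt_iff₀ (by positivity)]
    -- Expanding both sides leaves exactly this inequality, which is tightest at `m = 0`.
    have h_gap : 2 * (m : ℝ) + 2 < (4 * m + 3) * w := by
      have : (4 * m + 3 : ℝ) * (2 / 3) < (4 * m + 3) * w := by gcongr
      have : (0 : ℝ) ≤ m := m.cast_nonneg
      linarith
    linear_combination h_gap
  rw [tieProb_succ, mul_pow, mul_assoc, Nat.cast_succ]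
  exact mul_lt_mul_of_pos_left h (pow_pos (tieProb_pos m) 2)

lemma sgn_neg {z : ℝ} (hz : z ≠ 0) : sgn (-z) = -sgn z := by
  rcases hz.lt_or_gt with h | h <;> simp [sgn, h.le, h.not_ge]

lemma sum_Maj {n : ℕ} (hn : Odd n) : ∑ x, Maj n x = 0 :=
  sum_eq_zero_of_not_eq_neg fun x ↦ by
    have hx : ∑ i, chi (x i) ≠ 0 := sum_chi_ne_zero (by rwa [Fintype.card_fin]) x
    simp only [Maj, chi_not, sum_neg_distrib, sgn_neg hx]

lemma sgn_two_mul_succ_sub (k c : ℕ) :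
    sgn (2 * (c + 1 : ℕ) - (2 * k + 1 : ℕ)) - sgn (2 * c - (2 * k + 1 : ℕ))
      = if c = k then 2 else 0 := by
  have h (a : ℕ) : sgn (2 * a - (2 * k + 1 : ℕ)) = if k < a then 1 else -1 := by
    have : (0 : ℝ) ≤ 2 * a - (2 * k + 1 : ℕ) ↔ k < a := by
      rw [sub_nonneg]
      norm_cast
      omega
    simp only [sgn, this]
  rw [h, h]
  split_ifs <;> first | omega | norm_num

lemma fourierCoeff_Maj_singleton (k : ℕ) (i : Fin (2 * k + 1)) :
    fourierCoeff (Maj (2 * k + 1)) {i} = tieProb k := by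
  have h : ∑ x, Maj (2 * k + 1) x * chi (x i) = 2 * k.centralBinom := by
    simp only [Maj, sum_chi_eq, Fintype.card_fin]
    rw [sum_comp_trueCount_mul_chi (fun c ↦ sgn (2 * c - (2 * k + 1 : ℕ)))]
    simp only [sgn_two_mul_succ_sub, mul_ite, mul_zero, sum_ite_eq', mem_range]
    rw [if_pos (by omega), Nat.add_sub_cancel, Nat.centralBinom, mul_comm]
  rw [fourierCoeff_singleton, h, tieProb, pow_succ]
  field_simp

lemma fourierWeight_one_Maj (k : ℕ) :
    fourierWeight 1 (Maj (2 * k + 1)) = (2 * k + 1) * tieProb k ^ 2 := by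
  simp [fourierWeight_one, fourierCoeff_Maj_singleton]

lemma sum_chi_eq_two_mul_sub {m : ℕ} (x : Fin (2 * m) → Bool) :
    ∑ i, chi (x i) = 2 * ((trueCount x - m : ℤ) : ℝ) := by
  rw [sum_chi_eq, Fintype.card_fin]
  push_cast
  ring

lemma sign_mul_of_pos {a : ℝ} (ha : 0 < a) (s : ℝ) : Real.sign (a * s) = Real.sign s := by
  have h_neg : a * s < 0 ↔ s < 0 := by
    rw [← neg_pos, ← mul_neg, mul_pos_iff_of_pos_left ha, neg_pos]
  simp only [Real.sign, h_neg, mul_pos_iff_of_pos_left ha]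

lemma sign_sum_chi {m : ℕ} (x : Fin (2 * m) → Bool) :
    Real.sign (∑ i, chi (x i)) = (trueCount x - m : ℤ).sign := by
  rw [sum_chi_eq_two_mul_sub, sign_mul_of_pos two_pos, Real.sign_intCast]

lemma sign_add_one_sub_sign (z : ℤ) :
    (z + 1).sign - z.sign = if z = -1 ∨ z = 0 then 1 else 0 := by
  rcases lt_or_ge z (-1) with h | h
  · rw [Int.sign_eq_neg_one_of_neg (by omega), Int.sign_eq_neg_one_of_neg (by omega),
      if_neg (by omega), sub_self]
  rcases lt_or_ge 0 z with h' | h'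
  · rw [Int.sign_eq_one_of_pos (by omega), Int.sign_eq_one_of_pos h', if_neg (by omega), sub_self]
  · obtain rfl | rfl : z = -1 ∨ z = 0 := by omega
    · rfl
    · rfl

lemma sum_sign_mul_chi (m : ℕ) (i : Fin (2 * m)) :
    ∑ x : Fin (2 * m) → Bool, Real.sign (∑ j, chi (x j)) * chi (x i) = m.centralBinom := by
  have hm : 0 < m := by have := i.pos; omega
  have diff_sign (c : ℕ) : (((c + 1 : ℕ) - m : ℤ).sign : ℝ) - (c - m : ℤ).sign
      = (if c = m - 1 then 1 else 0) + if c = m then 1 else 0 := by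
    rw [← Int.cast_sub, Nat.cast_succ, add_sub_right_comm, sign_add_one_sub_sign]
    split_ifs <;> first | omega | norm_num
  simp only [sign_sum_chi]
  rw [sum_comp_trueCount_mul_chi (fun c ↦ ((c - m : ℤ).sign : ℝ))]
  simp only [diff_sign, mul_add, sum_add_distrib, mul_ite, mul_one, mul_zero, sum_ite_eq',
    mem_range]
  rw [if_pos (by omega), if_pos (by omega), Nat.centralBinom,
    Nat.choose_eq_choose_pred_add (n := 2 * m) (by omega) hm, Nat.cast_add]

lemma card_filter_sum_chi_eq_zero (m : ℕ) :
    #{x : Fin (2 * m) → Bool | ∑ i, chi (x i) = 0} = m.centralBinom := by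
  have h (x : Fin (2 * m) → Bool) : ∑ i, chi (x i) = 0 ↔ trueCount x = m := by
    rw [sum_chi_eq_two_mul_sub, mul_eq_zero_iff_left two_ne_zero, Int.cast_eq_zero]
    omega
  simp only [h, card_filter_trueCount_eq, Fintype.card_fin, Nat.centralBinom]

section TieBreak

/-- The majority of the first `N` bits, with ties broken by applying `h` to the last `k` bits. -/
noncomputable def majTieBreak {k : ℕ} (N : ℕ) (h : (Fin k → Bool) → ℝ)
    (z : Fin (N + k) → Bool) : ℝ :=
  if ∑ i, chi (z (Fin.castAdd k i)) = 0 then h fun j ↦ z (Fin.natAdd N j)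
  else Real.sign (∑ i, chi (z (Fin.castAdd k i)))

variable {k : ℕ} {h : (Fin k → Bool) → ℝ}

lemma majTieBreak_append {N : ℕ} (x : Fin N → Bool) (y : Fin k → Bool) :
    majTieBreak N h (Fin.append x y)
      = if ∑ i, chi (x i) = 0 then h y else Real.sign (∑ i, chi (x i)) := by
  simp only [majTieBreak, Fin.append_left, Fin.append_right]

lemma sum_majTieBreak_append {N : ℕ} (h_bal : ∑ y, h y = 0) (x : Fin N → Bool) :
    ∑ y, majTieBreak N h (Fin.append x y) = 2 ^ k * Real.sign (∑ i, chi (x i)) := by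
  simp only [majTieBreak_append]
  split_ifs with hx
  · rw [h_bal, hx, Real.sign_zero, mul_zero]
  · simp

lemma sum_majTieBreak_append_mul_chi {N : ℕ} (x : Fin N → Bool) (j : Fin k) :
    ∑ y, majTieBreak N h (Fin.append x y) * chi (y j)
      = if ∑ i, chi (x i) = 0 then ∑ y, h y * chi (y j) else 0 := by
  simp only [majTieBreak_append]
  split_ifs with hx
  · rfl
  · rw [← mul_sum, sum_chi_apply, mul_zero]

lemma fourierCoeff_majTieBreak_castAdd (h_bal : ∑ y, h y = 0) {m : ℕ} (i : Fin (2 * m)) :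
    fourierCoeff (majTieBreak (2 * m) h) {Fin.castAdd k i} = tieProb m := by
  rw [fourierCoeff_singleton, sum_univ_append]
  simp only [Fin.append_left, ← sum_mul, sum_majTieBreak_append h_bal, mul_assoc, ← mul_sum,
    sum_sign_mul_chi]
  rw [tieProb, pow_add]
  field_simp

lemma fourierCoeff_majTieBreak_natAdd (m : ℕ) (j : Fin k) :
    fourierCoeff (majTieBreak (2 * m) h) {Fin.natAdd (2 * m) j}
      = tieProb m * fourierCoeff h {j} := by
  rw [fourierCoeff_singleton, fourierCoeff_singleton, sum_univ_append]
  simp only [Fin.append_right, sum_majTieBreak_append_mul_chi, ← sum_filter, sum_const,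
    card_filter_sum_chi_eq_zero, nsmul_eq_mul]
  rw [tieProb, pow_add]
  field_simp

theorem fourierWeight_one_majTieBreak (h_bal : ∑ y, h y = 0) (m : ℕ) :
    fourierWeight 1 (majTieBreak (2 * m) h) = tieProb m ^ 2 * (2 * m + fourierWeight 1 h) := by
  simp only [fourierWeight_one, Fin.sum_univ_add, fourierCoeff_majTieBreak_castAdd h_bal,
    fourierCoeff_majTieBreak_natAdd, mul_pow, ← mul_sum, sum_const, card_univ, Fintype.card_fin,
    nsmul_eq_mul]
  push_cast
  ring

theorem strictAnti_fourierWeight_one_majTieBreak (h_bal : ∑ y, h y = 0)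
    (hw : 2 / 3 < fourierWeight 1 h) :
    StrictAnti fun m ↦ fourierWeight 1 (majTieBreak (2 * m) h) := by
  simpa only [fourierWeight_one_majTieBreak h_bal] using strictAnti_tieProb_sq_mul hw

end TieBreak

lemma sgn_add_of_abs_lt {a t : ℝ} (h : |t| < |a|) : sgn (a + t) = Real.sign a := by
  have ⟨h_neg, h_pos⟩ := abs_lt.1 h
  rcases lt_trichotomy a 0 with ha | rfl | ha
  · rw [abs_of_neg ha] at h_pos
    rw [Real.sign_of_neg ha, sgn, if_neg (by linarith)]
  · simp [(abs_nonneg t).not_gt] at h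
  · rw [abs_of_pos ha] at h_neg
    rw [Real.sign_of_pos ha, sgn, if_pos (by linarith)]

lemma two_le_abs_sum_chi {m : ℕ} {x : Fin (2 * m) → Bool} (hx : ∑ i, chi (x i) ≠ 0) :
    2 ≤ |∑ i, chi (x i)| := by
  rw [sum_chi_eq_two_mul_sub] at hx ⊢
  have h : (1 : ℝ) ≤ |((trueCount x - m : ℤ) : ℝ)| := by
    rw [← Int.cast_abs]
    exact_mod_cast Int.one_le_abs (Int.cast_ne_zero.1 (right_ne_zero_of_mul hx))
  rw [abs_mul, abs_two]
  linarith

lemma gfun_eq_majTieBreak (m : ℕ) : gfun (2 * m + 3) = majTieBreak (2 * m) (Maj 3) := by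
  funext z
  have sum_eq : gfun (2 * m + 3) z = sgn (2 * ∑ i, chi (z (Fin.castAdd 3 i))
      + ∑ j, chi (z (Fin.natAdd (2 * m) j))) := by
    simp [gfun, Fin.sum_univ_add, mul_sum]
  rw [sum_eq, majTieBreak]
  split_ifs with h0
  · rw [h0, mul_zero, zero_add, Maj]
  · have h_light : |∑ j, chi (z (Fin.natAdd (2 * m) j))| ≤ 3 := by
      simpa using abs_sum_chi_le fun j : Fin 3 ↦ z (Fin.natAdd (2 * m) j)
    have h_heavy := two_le_abs_sum_chi h0
    rw [sgn_add_of_abs_lt (by rw [abs_mul, abs_two]; linarith), sign_mul_of_pos two_pos]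

lemma fourierWeight_one_Maj_three : fourierWeight 1 (Maj 3) = 3 / 4 := by
  rw [fourierWeight_one_Maj 1]
  norm_num [tieProb, Nat.centralBinom]

theorem stmt13 (n : ℕ) (hn : Odd n) (h3 : 3 ≤ n) :
    fourierWeight 1 (gfun (n + 2)) < fourierWeight 1 (gfun n) := by
  obtain ⟨m, rfl⟩ : ∃ m, n = 2 * m + 3 := by
    obtain ⟨k, rfl⟩ := hn
    exact ⟨k - 1, by omega⟩
  have h_balanced : ∑ y, Maj 3 y = 0 := sum_Maj (by decide)
  have h_weight : 2 / 3 < fourierWeight 1 (Maj 3) := by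
    rw [fourierWeight_one_Maj_three]
    norm_num
  rw [show 2 * m + 3 + 2 = 2 * (m + 1) + 3 by ring, gfun_eq_majTieBreak, gfun_eq_majTieBreak]
  exact strictAnti_fourierWeight_one_majTieBreak h_balanced h_weight m.lt_succ_self

end BKS
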